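/- arXiv:0903.3835 — 4 statements merged into one kernel-verified Lean document; each statement's English description precedes it below -/
import Mathlib

section
/- Let R be a commutative Noetherian ring, G a linearly ordered abelian group, and v : R → G ∪ {+∞} a valuation (i.e. v(g₁g₂) = v(g₁) + v(g₂), v(g₁+g₂) ≥ min(v(g₁), v(g₂)), v(1) = 0) such that v(g) ≥ 0 for every g ∈ R. Then the set of values S = { v(g) : g ∈ R, v(g) ≠ +∞ } is well-ordered: every nonempty subset of S has a least element. -/
/-!
Each value `v x` determines the submodule `{y | v x ≤ v y}`. A strictly decreasing sequence of
values would give a strictly increasing sequence of these submodules, since `x` itself lies in its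
own submodule but not in that of an element of larger value; the Noetherian condition forbids this.
-/

section Submodule

variable {R M Γ : Type*} [Semiring R] [AddCommMonoid M] [Module R M] [SemilatticeInf Γ]
  {v : M → Γ}

section Superlevel

variable (hadd : ∀ x y, v x ⊓ v y ≤ v (x + y)) (hsmul : ∀ (c : R) x, v x ≤ v (c • x))

/-- The superlevel set `{y | v x ≤ v y}` as a submodule; over a ring with a nonnegative valuation
these are the valuation ideals. The level is taken of the form `v x` because for other levels the
set may be empty. -/
def superlevelSubmodule (x : M) : Submodule R M where
  carrier := {y | v x ≤ v y}
  add_mem' hy hz := (le_inf hy hz).trans (hadd _ _)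
  zero_mem' := (hsmul 0 x).trans_eq (congrArg v (zero_smul R x))
  smul_mem' c y hy := le_trans hy (hsmul c y)

theorem mem_superlevelSubmodule {x y : M} :
    y ∈ superlevelSubmodule hadd hsmul x ↔ v x ≤ v y :=
  Iff.rfl

theorem superlevelSubmodule_lt_of_lt {x y : M} (h : v x < v y) :
    superlevelSubmodule hadd hsmul y < superlevelSubmodule hadd hsmul x := by
  refine SetLike.lt_iff_le_and_exists.2 ⟨fun z hz => ?_, x, ?_, ?_⟩
  · exact h.le.trans ((mem_superlevelSubmodule hadd hsmul).1 hz)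
  · exact (mem_superlevelSubmodule hadd hsmul).2 le_rfl
  · exact fun hx => h.not_ge ((mem_superlevelSubmodule hadd hsmul).1 hx)

end Superlevel

theorem isWF_range_of_le_smul [IsNoetherian R M] (hadd : ∀ x y, v x ⊓ v y ≤ v (x + y))
    (hsmul : ∀ (c : R) x, v x ≤ v (c • x)) : (Set.range v).IsWF :=
  Set.wellFoundedOn_range.2 <|
    Subrelation.wf (superlevelSubmodule_lt_of_lt hadd hsmul)
      (InvImage.wf (superlevelSubmodule hadd hsmul) wellFounded_gt)

end Submodule

theorem poincare_stmt0_general {R : Type*} [Semiring R] [IsNoetherianRing R]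
    {G : Type*} [AddZeroClass G] [LinearOrder G] [AddRightMono G]
    (v : R → WithTop G)
    (hmul : ∀ g₁ g₂ : R, v g₁ + v g₂ ≤ v (g₁ * g₂))
    (hadd : ∀ g₁ g₂ : R, min (v g₁) (v g₂) ≤ v (g₁ + g₂))
    (hnonneg : ∀ g : R, 0 ≤ v g) :
    {a : G | ∃ g : R, v g = (a : WithTop G)}.IsWF := by
  have hsmul (c g : R) : v g ≤ v (c • g) :=
    (le_add_of_nonneg_left (hnonneg c)).trans (hmul c g)
  have hrange : (Set.range v).IsWF := isWF_range_of_le_smul hadd hsmul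
  exact (hrange.mapsTo WithTop.some fun _ ha => ha).mono' fun _ _ _ _ => WithTop.coe_lt_coe.2

/-- Let `R` be a commutative Noetherian ring, `G` a linearly ordered abelian
group, and `v : R → G ∪ {+∞}` a valuation (i.e. `v (g₁ * g₂) = v g₁ + v g₂`,
`v (g₁ + g₂) ≥ min (v g₁) (v g₂)`, `v 1 = 0`, `v 0 = +∞`) such that `v g ≥ 0` for every
`g ∈ R`.  Then the set of values `S = {v g : g ∈ R, v g ≠ +∞}` is well-ordered: every
nonempty subset of `S` has a least element. -/
theorem poincare_stmt0 {R : Type*} [CommRing R] [IsNoetherianRing R]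
    {G : Type*} [AddCommGroup G] [LinearOrder G] [IsOrderedAddMonoid G]
    (v : R → WithTop G)
    (hmul : ∀ g₁ g₂ : R, v (g₁ * g₂) = v g₁ + v g₂)
    (hadd : ∀ g₁ g₂ : R, min (v g₁) (v g₂) ≤ v (g₁ + g₂))
    (hone : v 1 = 0)
    (hzero : v 0 = ⊤)
    (hnonneg : ∀ g : R, 0 ≤ v g)
    (S : Set G)
    (hS : S = {a : G | ∃ g : R, v g = (a : WithTop G)}) :
    ∀ T : Set G, T ⊆ S → T.Nonempty → ∃ m ∈ T, ∀ a ∈ T, m ≤ a := by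
  subst hS
  have hS := poincare_stmt0_general v (fun g₁ g₂ => (hmul g₁ g₂).ge) hadd hnonneg
  exact fun T hTS hT => ⟨_, (hS.mono hTS).min_mem hT, fun _ => (hS.mono hTS).min_le hT⟩
end

section
/- For any formal power series φ₁, φ₂ ∈ ℂ[[τ]] with zero constant term, the kernel of the substitution homomorphism ℂ[[x,y]] → ℂ[[τ]], g(x,y) ↦ g(φ₁(τ), φ₂(τ)), is a nonzero prime ideal of ℂ[[x,y]]. In particular, the curve valuation g ↦ ord_τ(g(φ₁,φ₂)) always has a nontrivial kernel: there exists g ≠ 0 with g(φ₁,φ₂) = 0. -/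
/-- The substitution `g(x,y) ↦ g(φ₁(τ), φ₂(τ))` of two one-variable power series with zero
constant term into a two-variable power series. -/
noncomputable def substPS (φ₁ φ₂ : PowerSeries ℂ) (g : MvPowerSeries (Fin 2) ℂ) :
    PowerSeries ℂ :=
  PowerSeries.mk fun d =>
    ∑ p ∈ Finset.range (d + 1) ×ˢ Finset.range (d + 1),
      MvPowerSeries.coeff (Finsupp.single 0 p.1 + Finsupp.single 1 p.2) g *
        PowerSeries.coeff d (φ₁ ^ p.1 * φ₂ ^ p.2)

/-!
If `φ₁ = 0` then `x` lies in the kernel. Otherwise `φ₁` is a unit times a power of `τ`, so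
`k⟦τ⟧ / (φ₁)` is finite over `k`, and Nakayama's lemma for complete rings makes `k⟦τ⟧` finite over
`k⟦x⟧` along `x ↦ φ₁`. Hence `φ₂` is a root of a monic polynomial `P(x, Y)` over `k⟦x⟧`, and
`P(x, y) ∈ k⟦x, y⟧` vanishes at `(φ₁, φ₂)`. It is nonzero because `P(0, y)` is monic.
-/

open scoped PowerSeries

section CompleteNakayama

variable {A : Type*} [CommRing A] (I : Ideal A)

theorem isPrecomplete_pi {ι : Type*} [Finite ι] (M : ι → Type*) [∀ i, AddCommGroup (M i)]
    [∀ i, Module A (M i)] [∀ i, IsPrecomplete I (M i)] : IsPrecomplete I (∀ i, M i) := by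
  classical
  cases nonempty_fintype ι
  refine AdicCompletion.of_surjective_iff.mp fun y ↦ ?_
  choose x hx using fun i ↦ AdicCompletion.of_surjective I (M i) (AdicCompletion.pi I M y i)
  refine ⟨x, (AdicCompletion.piEquivOfFintype I M).injective (funext fun i ↦ ?_)⟩
  rw [AdicCompletion.piEquivOfFintype_apply, AdicCompletion.piEquivOfFintype_apply, ← hx]
  rfl

theorem module_finite_of_finite_quotient_smul_top (M : Type*) [AddCommGroup M] [Module A M]
    [IsPrecomplete I A] [IsHausdorff I M] [Module.Finite A (M ⧸ (I • ⊤ : Submodule A M))] :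
    Module.Finite A M := by
  obtain ⟨n, f, hf⟩ := Module.Finite.exists_fin' A (M ⧸ (I • ⊤ : Submodule A M))
  obtain ⟨g, rfl⟩ := Module.projective_lifting_property _ f (Submodule.mkQ_surjective _)
  have := isPrecomplete_pi I fun _ : Fin n ↦ A
  exact .of_surjective g (surjective_of_mkQ_comp_surjective hf)

theorem ringHom_finite_of_finite_mk_map_comp {B : Type*} [CommRing B] (f : A →+* B)
    [IsPrecomplete I A] [IsHausdorff (I.map f) B]
    (h : ((Ideal.Quotient.mk (I.map f)).comp f).Finite) : f.Finite := by
  algebraize [f]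
  have : IsHausdorff I B := IsHausdorff.map_algebraMap_iff.mp ‹IsHausdorff (I.map f) B›
  have : Module.Finite A (B ⧸ I.map f) := h
  have : Module.Finite A (B ⧸ (I • ⊤ : Submodule A B)) := by
    rw [Ideal.smul_top_eq_map]
    exact this
  exact module_finite_of_finite_quotient_smul_top I B

end CompleteNakayama

section FiniteSubst

variable {R : Type*} [CommRing R] {φ : R⟦X⟧} {n : ℕ}

theorem module_finite_quotient_span_of_dvd_X_pow (h : φ ∣ PowerSeries.X ^ n) :
    Module.Finite R (R⟦X⟧ ⧸ Ideal.span {φ}) := by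
  let π := Ideal.Quotient.mkₐ R (Ideal.span {φ})
  let c := Fintype.linearCombination R fun i : Fin n ↦ π (PowerSeries.X ^ (i : ℕ))
  have hX : π (PowerSeries.X ^ n) = 0 :=
    Ideal.Quotient.eq_zero_iff_mem.mpr (Ideal.mem_span_singleton.mpr h)
  refine .of_surjective c (Ideal.Quotient.mk_surjective.forall.mpr fun f ↦ ?_)
  refine ⟨fun i ↦ PowerSeries.coeff i f, ?_⟩
  calc c (fun i ↦ PowerSeries.coeff i f)
    _ = π (f.trunc n) := by
      rw [← Polynomial.eval₂_C_X_eq_coe, PowerSeries.eval₂_trunc_eq_sum_range, Finset.sum_range]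
      simp only [c, Fintype.linearCombination_apply, ← PowerSeries.smul_eq_C_mul, map_sum, map_smul]
    _ = π f := by
      conv_rhs => rw [PowerSeries.eq_shift_mul_X_pow_add_trunc n f]
      rw [map_add, map_mul, hX, mul_zero, zero_add]

theorem finite_substAlgHom_of_dvd_X_pow (h₀ : PowerSeries.constantCoeff φ = 0)
    (h : φ ∣ PowerSeries.X ^ n) :
    (PowerSeries.substAlgHom (R := R)
      (PowerSeries.HasSubst.of_constantCoeff_zero' h₀)).toRingHom.Finite := by
  set s := PowerSeries.substAlgHom (R := R) (PowerSeries.HasSubst.of_constantCoeff_zero' h₀)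
  have hmap : (Ideal.span {PowerSeries.X}).map s.toRingHom = Ideal.span {φ} := by
    rw [Ideal.map_span, Set.image_singleton]
    exact congrArg (fun f ↦ Ideal.span {f}) (PowerSeries.substAlgHom_X _)
  have hle : Ideal.span {φ} ≤ Ideal.span {PowerSeries.X} :=
    Ideal.span_singleton_le_span_singleton.mpr (PowerSeries.X_dvd_iff.mpr h₀)
  have : IsHausdorff ((Ideal.span {PowerSeries.X}).map s.toRingHom) R⟦X⟧ := by
    rw [hmap]
    refine IsHausdorff.of_map (S := R⟦X⟧) (J := Ideal.span {PowerSeries.X}) ?_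
    rwa [Algebra.algebraMap_self, Ideal.map_id]
  refine ringHom_finite_of_finite_mk_map_comp (Ideal.span {PowerSeries.X}) s.toRingHom ?_
  rw [hmap]
  refine .of_comp_finite (f := algebraMap R R⟦X⟧) ?_
  rw [RingHom.comp_assoc, AlgHom.toRingHom_eq_coe, AlgHom.comp_algebraMap]
  have := module_finite_quotient_span_of_dvd_X_pow h
  exact RingHom.finite_algebraMap.mpr this

end FiniteSubst

section Relation

variable {σ R : Type*} [CommRing R]

theorem substAlgHom_eval₂_toMvPowerSeries {τ : Type*} {a : σ → MvPowerSeries τ R}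
    (ha : MvPowerSeries.HasSubst a) (i j : σ) (p : Polynomial R⟦X⟧) :
    MvPowerSeries.substAlgHom (R := R) ha
        (p.eval₂ (PowerSeries.toMvPowerSeries i).toRingHom (MvPowerSeries.X j)) =
      p.eval₂ (PowerSeries.substAlgHom (R := R) (ha.const_coeff i)).toRingHom (a j) := by
  rw [← AlgHom.coe_toRingHom, Polynomial.hom_eval₂]
  congr 1
  · ext1 f
    simpa [PowerSeries.coe_substAlgHom] using PowerSeries.subst_toMvPowerSeries ha
  · exact MvPowerSeries.substAlgHom_X ha j

theorem hasSubst_piSingle_X [DecidableEq σ] (j : σ) :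
    MvPowerSeries.HasSubst (S := R) (τ := Unit) (Pi.single j PowerSeries.X) where
  const_coeff i := by
    obtain rfl | hij := eq_or_ne i j
    · simpa using! PowerSeries.HasSubst.X'
    · simp [hij]
  coeff_zero d := (Set.finite_singleton j).subset fun i hi ↦ by
    by_contra hij
    exact hi (by simp [Pi.single_eq_of_ne hij])

theorem eval₂_toMvPowerSeries_ne_zero {i j : σ} (hij : i ≠ j) {p : Polynomial R⟦X⟧}
    (hp : p.map PowerSeries.constantCoeff ≠ 0) :
    p.eval₂ (PowerSeries.toMvPowerSeries i).toRingHom (MvPowerSeries.X j) ≠ 0 := by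
  classical
  intro hzero
  have h := substAlgHom_eval₂_toMvPowerSeries (R := R) (hasSubst_piSingle_X j) i j p
  have hconst : (PowerSeries.substAlgHom (R := R)
      ((hasSubst_piSingle_X (R := R) j).const_coeff i)).toRingHom =
        PowerSeries.C.comp PowerSeries.constantCoeff := by
    ext1 f
    rw [AlgHom.toRingHom_eq_coe, RingHom.coe_coe, PowerSeries.coe_substAlgHom,
      Pi.single_eq_of_ne hij]
    exact PowerSeries.subst_zero_eq_C_constantCoeff
  rw [hzero, map_zero, hconst, Pi.single_eq_same, ← Polynomial.eval₂_map,
    Polynomial.eval₂_C_X_eq_coe, eq_comm, Polynomial.coe_eq_zero_iff] at h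
  exact hp h

theorem exists_ne_zero_substAlgHom_eq_zero_of_dvd_X_pow [Nontrivial R] {φ : σ → R⟦X⟧}
    (hφ : MvPowerSeries.HasSubst φ) {i j : σ} (hij : i ≠ j) {n : ℕ}
    (h₀ : PowerSeries.constantCoeff (φ i) = 0) (h : φ i ∣ PowerSeries.X ^ n) :
    ∃ g ≠ 0, MvPowerSeries.substAlgHom (R := R) hφ g = 0 := by
  obtain ⟨p, hp, hroot⟩ := (finite_substAlgHom_of_dvd_X_pow h₀ h).to_isIntegral (φ j)
  exact ⟨_, eval₂_toMvPowerSeries_ne_zero hij (hp.map _).ne_zero,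
    (substAlgHom_eval₂_toMvPowerSeries hφ i j p).trans hroot⟩

theorem exists_ne_zero_substAlgHom_eq_zero {k : Type*} [Field k] [Nontrivial σ] {φ : σ → k⟦X⟧}
    (hφ : MvPowerSeries.HasSubst φ) :
    ∃ g ≠ 0, MvPowerSeries.substAlgHom (R := k) hφ g = 0 := by
  obtain ⟨i, j, hij⟩ := exists_pair_ne σ
  by_cases hi : φ i = 0
  · refine ⟨MvPowerSeries.X i, fun hX ↦ ?_, (MvPowerSeries.substAlgHom_X hφ i).trans hi⟩
    simpa [MvPowerSeries.coeff_X] using congrArg (MvPowerSeries.coeff (Finsupp.single i 1)) hX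
  · obtain ⟨n, hn⟩ :=
      IsDiscreteValuationRing.associated_pow_irreducible hi PowerSeries.X_irreducible
    exact exists_ne_zero_substAlgHom_eq_zero_of_dvd_X_pow hφ hij (hφ.const_coeff i).eq_zero hn.dvd

end Relation

section Pair

variable {R : Type*} [CommRing R] {φ₁ φ₂ : R⟦X⟧}

theorem hasSubst_pair (h₁ : PowerSeries.constantCoeff φ₁ = 0)
    (h₂ : PowerSeries.constantCoeff φ₂ = 0) :
    MvPowerSeries.HasSubst (S := R) (τ := Unit) ![φ₁, φ₂] :=
  MvPowerSeries.hasSubst_of_constantCoeff_zero (Fin.forall_fin_two.mpr ⟨h₁, h₂⟩)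

theorem coeff_pow_mul_pow_eq_zero (h₁ : PowerSeries.constantCoeff φ₁ = 0)
    (h₂ : PowerSeries.constantCoeff φ₂ = 0) {d i j : ℕ} (hd : d < i + j) :
    PowerSeries.coeff d (φ₁ ^ i * φ₂ ^ j) = 0 := by
  have hdvd : PowerSeries.X ^ (i + j) ∣ φ₁ ^ i * φ₂ ^ j := by
    rw [pow_add]
    exact mul_dvd_mul (pow_dvd_pow_of_dvd (PowerSeries.X_dvd_iff.mpr h₁) i)
      (pow_dvd_pow_of_dvd (PowerSeries.X_dvd_iff.mpr h₂) j)
  exact PowerSeries.X_pow_dvd_iff.mp hdvd d hd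

theorem coeff_subst_pair (h₁ : PowerSeries.constantCoeff φ₁ = 0)
    (h₂ : PowerSeries.constantCoeff φ₂ = 0) (g : MvPowerSeries (Fin 2) R) (d : ℕ) :
    PowerSeries.coeff d (MvPowerSeries.subst ![φ₁, φ₂] g) =
      ∑ p ∈ Finset.range (d + 1) ×ˢ Finset.range (d + 1),
        MvPowerSeries.coeff (Finsupp.single 0 p.1 + Finsupp.single 1 p.2) g *
          PowerSeries.coeff d (φ₁ ^ p.1 * φ₂ ^ p.2) := by
  let e : ℕ × ℕ ≃ (Fin 2 →₀ ℕ) := (finTwoArrowEquiv ℕ).symm.trans Finsupp.equivFunOnFinite.symm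
  have he (p : ℕ × ℕ) : e p = Finsupp.single 0 p.1 + Finsupp.single 1 p.2 := by
    ext i
    fin_cases i <;> simp [e]
  have hprod (p : ℕ × ℕ) : ((e p).prod fun s m ↦ ![φ₁, φ₂] s ^ m) = φ₁ ^ p.1 * φ₂ ^ p.2 := by
    simp [Finsupp.prod_fintype, e]
  calc PowerSeries.coeff d (MvPowerSeries.subst ![φ₁, φ₂] g)
    _ = ∑ᶠ q : Fin 2 →₀ ℕ, MvPowerSeries.coeff q g *
          PowerSeries.coeff d (q.prod fun s m ↦ ![φ₁, φ₂] s ^ m) :=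
      MvPowerSeries.coeff_subst (hasSubst_pair h₁ h₂) g (Finsupp.single () d)
    _ = ∑ᶠ p : ℕ × ℕ, MvPowerSeries.coeff (Finsupp.single 0 p.1 + Finsupp.single 1 p.2) g *
          PowerSeries.coeff d (φ₁ ^ p.1 * φ₂ ^ p.2) := by
      simp only [← finsum_comp_equiv e, hprod]
      simp only [he]
    _ = _ := by
      refine finsum_eq_sum_of_support_subset _ fun p hp ↦ ?_
      have hle : p.1 + p.2 ≤ d := by
        by_contra! hlt
        exact hp (by simp only [coeff_pow_mul_pow_eq_zero h₁ h₂ hlt, mul_zero])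
      simp only [Finset.coe_product, Finset.coe_range, Set.mem_prod, Set.mem_Iio]
      omega

end Pair

theorem substPS_eq_substAlgHom {φ₁ φ₂ : ℂ⟦X⟧} (h₁ : PowerSeries.constantCoeff φ₁ = 0)
    (h₂ : PowerSeries.constantCoeff φ₂ = 0) :
    substPS φ₁ φ₂ = MvPowerSeries.substAlgHom (R := ℂ) (hasSubst_pair h₁ h₂) := by
  ext g d
  rw [MvPowerSeries.coe_substAlgHom, coeff_subst_pair h₁ h₂, substPS, PowerSeries.coeff_mk]

theorem poincare_stmt3_general {k σ : Type*} [Field k] [Nontrivial σ] {φ : σ → k⟦X⟧}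
    (hφ : MvPowerSeries.HasSubst φ) :
    RingHom.ker (MvPowerSeries.substAlgHom (R := k) hφ) ≠ ⊥ ∧
      (RingHom.ker (MvPowerSeries.substAlgHom (R := k) hφ)).IsPrime := by
  obtain ⟨g, hg, hg₀⟩ := exists_ne_zero_substAlgHom_eq_zero hφ
  exact ⟨(Submodule.ne_bot_iff _).mpr ⟨g, hg₀, hg⟩, RingHom.ker_isPrime _⟩

/-- For any `φ₁, φ₂ ∈ ℂ[[τ]]` with zero constant term, the kernel of the
substitution homomorphism `ℂ[[x,y]] → ℂ[[τ]]`, `g ↦ g(φ₁, φ₂)`, is a nonzero prime ideal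
of `ℂ[[x,y]]`.  In particular there exists `g ≠ 0` with `g(φ₁, φ₂) = 0`. -/
theorem poincare_stmt3 (φ₁ φ₂ : PowerSeries ℂ)
    (h₁ : PowerSeries.constantCoeff φ₁ = 0)
    (h₂ : PowerSeries.constantCoeff φ₂ = 0) :
    (∃ I : Ideal (MvPowerSeries (Fin 2) ℂ),
      (I : Set (MvPowerSeries (Fin 2) ℂ)) = {g | substPS φ₁ φ₂ g = 0} ∧
      I ≠ ⊥ ∧ I.IsPrime) ∧
    ∃ g : MvPowerSeries (Fin 2) ℂ, g ≠ 0 ∧ substPS φ₁ φ₂ g = 0 := by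
  obtain ⟨hne, hprime⟩ := poincare_stmt3_general (hasSubst_pair h₁ h₂)
  rw [substPS_eq_substAlgHom h₁ h₂]
  exact ⟨⟨_, rfl, hne, hprime⟩, ((Submodule.ne_bot_iff _).mp hne).imp fun _ ↦ And.symm⟩
end

section
/- Let v₁, …, v_s be valuations on ℂ[[x,y]] with values in linearly ordered abelian groups G₁, …, G_s, each taking nonnegative values (together with +∞) and each centred at the origin, i.e. {g : v_i(g) > 0} = m for each i. For γ = (γ₁, …, γ_s) ∈ G₁ × ⋯ × G_s let J(γ) = {g : v_i(g) ≥ γ_i for all i} and J⁺(γ) = {g : v_i(g) > γ_i for all i}. Then for every γ the quotient J(γ)/J⁺(γ) is a finite-dimensional ℂ-vector space; consequently, for every subset I ⊆ {1,…,s}, the space J^{+I}(γ)/J⁺(γ) is finite-dimensional, where J^{+I}(γ) = {g ∈ J(γ) : v_i(g) > γ_i for i ∈ I}. -/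
/-!
If `𝔪` is the centre of the valuations, multiplying by an element of `𝔪` strictly increases every
finite value, so `𝔪 • J(γ) ⊆ J⁺(γ)`. Each `J^{+I}(γ)` is an ideal of a Noetherian ring, hence
finitely generated, and so `J^{+I}(γ) / 𝔪 • J^{+I}(γ)` is a finite module over the residue ring,
which for power series is the coefficient field. It surjects onto `J^{+I}(γ) / J⁺(γ)`.
-/

section FiniteQuotient

variable (k : Type*) {R M : Type*} [CommRing k] [CommRing R] [Algebra k R] [AddCommGroup M]
  [Module R M] [Module k M] [IsScalarTower k R M]

theorem finite_quotient_submoduleOf_of_smul_le (m : Ideal R) [Module.Finite k (R ⧸ m)]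
    {K N : Submodule R M} (hK : K.FG) (hmK : m • K ≤ N) :
    Module.Finite k (K ⧸ N.submoduleOf K) := by
  have : Module.Finite R K := .of_fg hK
  have : Module.Finite k (K ⧸ m • (⊤ : Submodule R K)) := .trans (R ⧸ m) _
  have hle : m • (⊤ : Submodule R K) ≤ N.submoduleOf K := by
    rwa [Submodule.submoduleOf, ← Submodule.map_le_iff_le_comap, Submodule.map_smul'',
      Submodule.map_subtype_top]
  exact .of_surjective ((Submodule.factor hle).restrictScalars k) (Submodule.factor_surjective hle)

theorem exists_finset_span_modulo_of_finite_quotient (K N : Submodule R M)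
    [Module.Finite k (K ⧸ N.submoduleOf K)] :
    ∃ B : Finset M, (B : Set M) ⊆ K ∧
      ∀ g ∈ K, ∃ p ∈ Submodule.span k (B : Set M), g - p ∈ N := by
  classical
  let incl : K →ₗ[k] M := K.subtype.restrictScalars k
  let π : K →ₗ[k] K ⧸ N.submoduleOf K := (N.submoduleOf K).mkQ.restrictScalars k
  have hπ : Function.Surjective π := (N.submoduleOf K).mkQ_surjective
  obtain ⟨S, hS⟩ := Module.Finite.fg_top (R := k) (M := K ⧸ N.submoduleOf K)
  obtain ⟨T, -, rfl⟩ : ∃ T : Finset K, (T : Set K) ⊆ Set.univ ∧ T.image π = S :=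
    Finset.subset_set_image_iff.1 (Set.image_univ_of_surjective hπ ▸ Set.subset_univ _)
  rw [Finset.coe_image, ← Submodule.map_span] at hS
  have hTK : (T.image incl : Set M) ⊆ K := by
    rw [Finset.coe_image]
    exact Set.image_subset_iff.2 fun g _ ↦ g.2
  refine ⟨T.image incl, hTK, fun g hg ↦ ?_⟩
  obtain ⟨p, hp, hpg⟩ : π ⟨g, hg⟩ ∈ (Submodule.span k (T : Set K)).map π :=
    hS ▸ Submodule.mem_top
  refine ⟨p, ?_, (Submodule.Quotient.eq (N.submoduleOf K)).1 hpg.symm⟩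
  rw [Finset.coe_image, ← Submodule.map_span]
  exact Submodule.mem_map_of_mem hp

end FiniteQuotient

section ValuationIdeals

variable {R : Type*} [CommRing R]

section SingleValuation

variable {Γ : Type*} [LinearOrderedAddCommMonoidWithTop Γ] (v : AddValuation R Γ)
  (hv : ∀ g, 0 ≤ v g) {c : Γ} (hc : c ≠ ⊤)

include hv in
theorem le_map_mul_left (a g : R) : v g ≤ v (a * g) := by
  rw [v.map_mul]
  exact le_add_of_nonneg_left (hv a)

variable (c) in
/-- The ideal `{g : v g ≥ c}` of a nonnegative valuation `v`. -/
def geIdeal : Ideal R where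
  carrier := {g | c ≤ v g}
  zero_mem' := by simp
  add_mem' := v.map_le_add
  smul_mem' a g hg := le_trans hg (le_map_mul_left v hv a g)

/-- The ideal `{g : v g > c}` of a nonnegative valuation `v`. The bound `c` has to be finite for
`0` to belong to it. -/
def gtIdeal : Ideal R where
  carrier := {g | c < v g}
  zero_mem' := by simpa using hc.lt_top
  add_mem' := v.map_lt_add
  smul_mem' a g hg := lt_of_lt_of_le hg (le_map_mul_left v hv a g)

variable {v} in
theorem smul_geIdeal_le_gtIdeal {m : Ideal R} (hm : ∀ a ∈ m, 0 < v a) :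
    m • geIdeal v hv c ≤ gtIdeal v hv hc := by
  refine Submodule.smul_le.2 fun a ha g (hg : c ≤ v g) ↦ ?_
  calc c = 0 + c := (zero_add c).symm
    _ < v a + c := (add_lt_add_iff_left_of_ne_top hc).2 (hm a ha)
    _ ≤ v a + v g := by gcongr
    _ = v (a • g) := (v.map_mul a g).symm

end SingleValuation

variable {ι : Type*} {Γ : ι → Type*} [∀ i, LinearOrderedAddCommMonoidWithTop (Γ i)]
  (v : ∀ i, AddValuation R (Γ i)) (hv : ∀ i g, 0 ≤ v i g) {γ : ∀ i, Γ i} (hγ : ∀ i, γ i ≠ ⊤)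

variable (γ) in
/-- The ideal `J(γ) = {g : v i g ≥ γ i for all i}` of the multi-index filtration. -/
def multiIndexIdeal : Ideal R := ⨅ i, geIdeal (v i) (hv i) (γ i)

/-- The ideal `J⁺(γ) = {g : v i g > γ i for all i}` of the multi-index filtration. -/
def strictMultiIndexIdeal : Ideal R := ⨅ i, gtIdeal (v i) (hv i) (hγ i)

/-- The ideal `J^{+I}(γ) = {g ∈ J(γ) : v i g > γ i for i ∈ I}` of the multi-index filtration. -/
def strictOnMultiIndexIdeal (I : Set ι) : Ideal R :=
  multiIndexIdeal v hv γ ⊓ ⨅ i ∈ I, gtIdeal (v i) (hv i) (hγ i)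

variable {v}

theorem mem_strictMultiIndexIdeal {g : R} :
    g ∈ strictMultiIndexIdeal v hv hγ ↔ ∀ i, γ i < v i g :=
  Submodule.mem_iInf _

theorem mem_strictOnMultiIndexIdeal {I : Set ι} {g : R} :
    g ∈ strictOnMultiIndexIdeal v hv hγ I ↔ (∀ i, γ i ≤ v i g) ∧ ∀ i ∈ I, γ i < v i g := by
  simp only [strictOnMultiIndexIdeal, multiIndexIdeal, Submodule.mem_inf, Submodule.mem_iInf]
  rfl

theorem smul_multiIndexIdeal_le_strictMultiIndexIdeal {m : Ideal R}
    (hm : ∀ i, ∀ a ∈ m, 0 < v i a) :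
    m • multiIndexIdeal v hv γ ≤ strictMultiIndexIdeal v hv hγ :=
  le_iInf fun i ↦ (smul_mono_right m (iInf_le _ i)).trans
    (smul_geIdeal_le_gtIdeal (hv i) (hγ i) (hm i))

variable (k : Type*) [CommRing k] [Algebra k R] [IsNoetherianRing R]

theorem finite_strictOnMultiIndexIdeal_quotient (m : Ideal R) [Module.Finite k (R ⧸ m)]
    (hm : ∀ i, ∀ a ∈ m, 0 < v i a) (I : Set ι) :
    Module.Finite k (strictOnMultiIndexIdeal v hv hγ I ⧸
      (strictMultiIndexIdeal v hv hγ).submoduleOf (strictOnMultiIndexIdeal v hv hγ I)) :=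
  finite_quotient_submoduleOf_of_smul_le k m (IsNoetherian.noetherian _) <|
    (smul_mono_right m inf_le_left).trans
      (smul_multiIndexIdeal_le_strictMultiIndexIdeal hv hγ hm)

end ValuationIdeals

section PowerSeries

open MvPowerSeries

variable {σ R : Type*} [Finite σ] [CommRing R]

theorem mem_span_range_X_of_constantCoeff_eq_zero {f : MvPowerSeries σ R}
    (hf : constantCoeff f = 0) :
    f ∈ Ideal.span (Set.range (X : σ → MvPowerSeries σ R)) := by
  classical
  cases nonempty_fintype σ
  cases isEmpty_or_nonempty σ
  · have : f = 0 := by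
      ext d
      rw [Subsingleton.elim d 0, coeff_zero_eq_constantCoeff_apply, hf, map_zero]
    simp only [this, zero_mem]
  -- Group the monomials of `f` by a chosen variable dividing each of them.
  have hex (d : σ →₀ ℕ) (hd : d ≠ 0) : ∃ i, d i ≠ 0 := Finsupp.ne_iff.1 hd
  choose! var hvar using hex
  let part (i : σ) : MvPowerSeries σ R := fun d ↦ if var d = i then coeff d f else 0
  have coeff_part (i d) : coeff d (part i) = if var d = i then coeff d f else 0 := rfl
  have X_dvd_part (i : σ) : X i ∣ part i := by
    refine X_dvd_iff.2 fun d hdi ↦ ?_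
    rw [coeff_part, ite_eq_right_iff]
    rintro rfl
    rw [not_imp_not.1 (hvar d) hdi, coeff_zero_eq_constantCoeff_apply, hf]
  have sum_part : ∑ i, part i = f := by
    ext d
    simp only [map_sum, coeff_part, Finset.sum_ite_eq, Finset.mem_univ, if_true]
  rw [← sum_part]
  exact sum_mem fun i _ ↦ Ideal.mem_of_dvd _ (X_dvd_part i) (Ideal.subset_span ⟨i, rfl⟩)

instance finite_quotient_span_range_X :
    Module.Finite R (MvPowerSeries σ R ⧸ Ideal.span (Set.range (X : σ → MvPowerSeries σ R))) := by
  refine .of_surjective (Algebra.linearMap R _) fun q ↦ ?_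
  obtain ⟨f, rfl⟩ := Ideal.Quotient.mk_surjective q
  have hf : constantCoeff (f - C (constantCoeff f)) = 0 := by simp
  exact ⟨constantCoeff f,
    (Ideal.Quotient.eq.2 (mem_span_range_X_of_constantCoeff_eq_zero hf)).symm⟩

instance finite_quotient_span_X_zero_X_one :
    Module.Finite R (MvPowerSeries (Fin 2) R ⧸
      Ideal.span {(X 0 : MvPowerSeries (Fin 2) R), X 1}) := by
  have hrange : Set.range (X : Fin 2 → MvPowerSeries (Fin 2) R) = {X 0, X 1} := by
    ext
    simp [eq_comm]
  exact hrange ▸ finite_quotient_span_range_X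

end PowerSeries

theorem poincare_stmt6_general {k R ι : Type*} [CommRing k] [CommRing R] [Algebra k R]
    [IsNoetherianRing R] {Γ : ι → Type*} [∀ i, LinearOrderedAddCommMonoidWithTop (Γ i)]
    (v : ∀ i, AddValuation R (Γ i)) (hv : ∀ i g, 0 ≤ v i g)
    (m : Ideal R) [Module.Finite k (R ⧸ m)] (hm : ∀ i, ∀ a ∈ m, 0 < v i a)
    (γ : ∀ i, Γ i) (hγ : ∀ i, γ i ≠ ⊤) (I : Set ι) :
    ∃ B : Finset R, ↑B ⊆ {g : R | (∀ i, γ i ≤ v i g) ∧ ∀ i ∈ I, γ i < v i g} ∧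
      ∀ g : R, ((∀ i, γ i ≤ v i g) ∧ ∀ i ∈ I, γ i < v i g) →
        ∃ p ∈ Submodule.span k (B : Set R), ∀ i, γ i < v i (g - p) := by
  have := finite_strictOnMultiIndexIdeal_quotient hv hγ k m hm I
  simpa only [Set.subset_def, SetLike.mem_coe, Set.mem_ofPred_eq, mem_strictMultiIndexIdeal,
    mem_strictOnMultiIndexIdeal] using exists_finset_span_modulo_of_finite_quotient k
      (strictOnMultiIndexIdeal v hv hγ I) (strictMultiIndexIdeal v hv hγ)

/-- Let `v₁, …, v_s` be valuations on `ℂ[[x,y]]` with values in linearly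
ordered abelian groups `G₁, …, G_s`, each taking nonnegative values (together with `+∞`)
and each centred at the origin, i.e. `{g : v_i g > 0} = m` for each `i`.  For
`γ = (γ₁, …, γ_s)` let `J(γ) = {g : v_i g ≥ γ_i for all i}` and
`J⁺(γ) = {g : v_i g > γ_i for all i}`.  Then for every `γ` the quotient `J(γ)/J⁺(γ)` is a
finite-dimensional `ℂ`-vector space (expressed here as: a finite subset of `J(γ)` spans
`J(γ)` modulo `J⁺(γ)`); consequently for every subset `I ⊆ {1, …, s}` the space
`J^{+I}(γ)/J⁺(γ)` is finite-dimensional, where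
`J^{+I}(γ) = {g ∈ J(γ) : v_i g > γ_i for i ∈ I}`. -/
theorem poincare_stmt6 {s : ℕ} (G : Fin s → Type*)
    [∀ i, AddCommGroup (G i)] [∀ i, LinearOrder (G i)] [∀ i, IsOrderedAddMonoid (G i)]
    (v : (i : Fin s) → MvPowerSeries (Fin 2) ℂ → WithTop (G i))
    (hmul : ∀ i g₁ g₂, v i (g₁ * g₂) = v i g₁ + v i g₂)
    (hadd : ∀ i g₁ g₂, min (v i g₁) (v i g₂) ≤ v i (g₁ + g₂))
    (hC : ∀ i (c : ℂ), c ≠ 0 → v i (MvPowerSeries.C (σ := Fin 2) (R := ℂ) c) = 0)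
    (hzero : ∀ i, v i 0 = ⊤)
    (hnonneg : ∀ i g, 0 ≤ v i g)
    (hcentred : ∀ i, {g : MvPowerSeries (Fin 2) ℂ | 0 < v i g} =
      ↑(Ideal.span {(MvPowerSeries.X 0 : MvPowerSeries (Fin 2) ℂ), MvPowerSeries.X 1})) :
    ∀ γ : (i : Fin s) → G i,
      (∃ B : Finset (MvPowerSeries (Fin 2) ℂ),
        (↑B ⊆ {g : MvPowerSeries (Fin 2) ℂ | ∀ i, (γ i : WithTop (G i)) ≤ v i g}) ∧
        ∀ g : MvPowerSeries (Fin 2) ℂ, (∀ i, (γ i : WithTop (G i)) ≤ v i g) →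
          ∃ p ∈ Submodule.span ℂ (B : Set (MvPowerSeries (Fin 2) ℂ)),
            ∀ i, (γ i : WithTop (G i)) < v i (g - p)) ∧
      ∀ I : Set (Fin s),
        ∃ B : Finset (MvPowerSeries (Fin 2) ℂ),
          (↑B ⊆ {g : MvPowerSeries (Fin 2) ℂ |
            (∀ i, (γ i : WithTop (G i)) ≤ v i g) ∧ ∀ i ∈ I, (γ i : WithTop (G i)) < v i g}) ∧
          ∀ g : MvPowerSeries (Fin 2) ℂ,
            ((∀ i, (γ i : WithTop (G i)) ≤ v i g) ∧ ∀ i ∈ I, (γ i : WithTop (G i)) < v i g) →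
            ∃ p ∈ Submodule.span ℂ (B : Set (MvPowerSeries (Fin 2) ℂ)),
              ∀ i, (γ i : WithTop (G i)) < v i (g - p) := by
  have hone i : v i 1 = 0 := by simpa only [map_one] using hC i 1 one_ne_zero
  have h (γ : ∀ i, G i) := poincare_stmt6_general (k := ℂ)
    (fun i ↦ AddValuation.of (v i) (hzero i) (hone i) (hadd i) (hmul i)) hnonneg
    (.span {.X 0, .X 1}) (fun i _ ha ↦ (hcentred i).ge ha)
    (fun i ↦ (γ i : WithTop (G i))) fun _ ↦ WithTop.coe_ne_top
  exact fun γ ↦ ⟨by simpa using h γ ∅, h γ⟩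
end

section
/- Every formal power series F ∈ ℤ[[t₁, …, t_s]] with constant term equal to 1 has a unique representation as an infinite product ∏_{a ∈ ℤ^s≥0, a ≠ 0} (1 − t^a)^{k_a} with integer exponents k_a ∈ ℤ (here t^a = t₁^{a₁}⋯t_s^{a_s}). Precisely: there is a unique family (k_a)_{a ∈ ℤ^s≥0 \ {0}} of integers such that for every N ≥ 1, F is congruent to the finite product ∏_{0 < a₁+⋯+a_s ≤ N} (1 − t^a)^{k_a} modulo the (N+1)-st power of the ideal (t₁, …, t_s). -/
open scoped BigOperators

/-!
Write `v a = 1 + c a t^a + (terms of degree > |a|)` for the factors and `P N` for the product of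
those with `|a| ≤ N`. All factors of degree `N + 1` are `1` up to degree `N` and `P N` has constant
term `1`, so modulo degree `N + 2` the error `F - P (N + 1)` is `F - P N` minus the sum of the
`c a t^a` with `|a| = N + 1`. Hence the congruences hold for all `N` if and only if each `c a` is
the coefficient of `t^a` in `F - P (|a| - 1)`. Since `P (|a| - 1)` involves only exponents of degree
less than `|a|`, this is a fixed point equation which has exactly one solution by recursion on the
degree. For `v a = (1 - t^a)^(k a)` the leading coefficient is `c a = -k a`.
-/

section FixedPoint

theorem existsUnique_isFixedPt_of_wellFounded {ι : Type*} {r : ι → ι → Prop}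
    (hr : WellFounded r) {β : ι → Type*} [∀ i, Nonempty (β i)]
    (Φ : (∀ i, β i) → ∀ i, β i)
    (hΦ : ∀ k l i, (∀ j, r j i → k j = l j) → Φ k i = Φ l i) :
    ∃! k, Function.IsFixedPt Φ k := by
  classical
  let step (i : ι) (k : ∀ j, r j i → β j) : β i :=
    Φ (fun j ↦ if h : r j i then k j h else Classical.arbitrary (β j)) i
  have hfix : Function.IsFixedPt Φ (hr.fix step) := funext fun i ↦ by
    rw [hr.fix_eq]
    exact hΦ _ _ i fun j hj ↦ by rw [dif_pos hj]
  refine ⟨hr.fix step, hfix, fun l hl ↦ funext fun i ↦ ?_⟩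
  induction i using hr.induction with
  | _ i ih =>
    calc l i = Φ l i := (congrFun hl i).symm
      _ = Φ (hr.fix step) i := hΦ _ _ i ih
      _ = hr.fix step i := congrFun hfix i

end FixedPoint

section FirstOrder

variable {S : Type*} [CommRing S]

theorem prod_sub_one_sub_sum_mem_sq {ι : Type*} {J : Ideal S} {s : Finset ι} {x : ι → S}
    (hx : ∀ i ∈ s, x i - 1 ∈ J) :
    ∏ i ∈ s, x i - 1 - ∑ i ∈ s, (x i - 1) ∈ J ^ 2 := by
  classical
  induction s using Finset.induction_on with
  | empty => simp
  | insert i s hi ih =>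
    rw [Finset.forall_mem_insert] at hx
    have hsum : ∑ j ∈ s, (x j - 1) ∈ J := sum_mem hx.2
    have hsplit : ∏ j ∈ insert i s, x j - 1 - ∑ j ∈ insert i s, (x j - 1) =
        x i * (∏ j ∈ s, x j - 1 - ∑ j ∈ s, (x j - 1)) +
          (x i - 1) * ∑ j ∈ s, (x j - 1) := by
      rw [Finset.prod_insert hi, Finset.sum_insert hi]
      ring
    rw [hsplit]
    exact add_mem (Ideal.mul_mem_left _ _ (ih hx.2)) (sq J ▸ Ideal.mul_mem_mul hx.1 hsum)

theorem sub_one_sq_dvd_zpow_sub (u : Sˣ) (k : ℤ) :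
    ((u : S) - 1) ^ 2 ∣ ((u ^ k : Sˣ) : S) - (1 + k * ((u : S) - 1)) := by
  have hstep (m : ℤ) : ((u ^ (m + 1) : Sˣ) : S) - (1 + ((m + 1 : ℤ) : S) * (u - 1)) =
      (((u ^ m : Sˣ) : S) - (1 + m * (u - 1))) * u + m * (u - 1) ^ 2 := by
    push_cast [zpow_add_one]
    ring
  induction k with
  | zero => simp
  | succ m ih =>
    rw [hstep]
    exact dvd_add (ih.mul_right _) (dvd_mul_left _ _)
  | pred m ih =>
    rw [← sub_add_cancel (-(m : ℤ)) 1, hstep, dvd_add_left (dvd_mul_left _ _),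
      Units.dvd_mul_right] at ih
    exact ih

end FirstOrder

section VariablesIdeal

open MvPowerSeries Finsupp

section CommSemiring

variable {σ R : Type*} [CommSemiring R]

variable (σ R) in
/-- The ideal `(t_i)_{i ∈ σ}` of the ring of power series, whose powers are the moduli of the
congruences between a power series and the partial products approximating it. -/
noncomputable abbrev variablesIdeal : Ideal (MvPowerSeries σ R) :=
  Ideal.span (Set.range X)

theorem monomial_mem_variablesIdeal_pow (a : σ →₀ ℕ) (r : R) :
    monomial a r ∈ variablesIdeal σ R ^ degree a := by
  rw [monomial_eq', degree_apply, ← Finset.prod_pow_eq_pow_sum]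
  exact Ideal.mul_mem_left _ _ <| Ideal.prod_mem_prod fun i _ ↦
    Ideal.pow_mem_pow (Ideal.subset_span (Set.mem_range_self i)) _

theorem natCast_le_order_of_mem_variablesIdeal_pow {n : ℕ} {f : MvPowerSeries σ R}
    (hf : f ∈ variablesIdeal σ R ^ n) : (n : ℕ∞) ≤ f.order := by
  induction n generalizing f with
  | zero => simp
  | succ n ih =>
    rw [pow_succ] at hf
    refine Submodule.mul_induction_on hf (fun g hg h hh ↦ ?_)
      fun g h hg hh ↦ (le_min hg hh).trans min_order_le_add
    have hker : variablesIdeal σ R ≤ RingHom.ker (constantCoeff (σ := σ) (R := R)) :=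
      Ideal.span_le.2 (by rintro _ ⟨i, rfl⟩; simp)
    rw [Nat.cast_succ]
    exact (add_le_add (ih hg) (one_le_order_iff_constCoeff_eq_zero.2 (hker hh))).trans
      le_order_mul

/- Every exponent of degree at least `n` dominates some `e` of degree `n`; grouping the terms of
`f` by a choice of `e` writes `f` as a finite sum of multiples of the monomials `t^e`. -/
theorem mem_variablesIdeal_pow_of_coeff_eq_zero [Finite σ] {n : ℕ} {f : MvPowerSeries σ R}
    (hf : ∀ d, degree d < n → coeff d f = 0) : f ∈ variablesIdeal σ R ^ n := by
  classical
  choose! e he_le he_degree using fun (d : σ →₀ ℕ) (hd : n ≤ degree d) ↦ exists_le_degree_eq d n hd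
  let E : Finset (σ →₀ ℕ) := (finite_of_degree_eq n).toFinset
  let g (b : σ →₀ ℕ) : MvPowerSeries σ R := fun d ↦ if e (d + b) = b then coeff (d + b) f else 0
  have coeff_g (b d) : coeff d (g b) = if e (d + b) = b then coeff (d + b) f else 0 := rfl
  have hfg : f = ∑ b ∈ E, monomial b 1 * g b := by
    ext d
    simp only [map_sum, coeff_monomial_mul, coeff_g, one_mul]
    rcases lt_or_ge (degree d) n with hd | hd
    · refine (hf d hd).trans (Finset.sum_eq_zero fun b hb ↦ if_neg fun hbd ↦ ?_).symm
      have := degree_mono hbd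
      simp only [E, Set.Finite.mem_toFinset, Set.mem_ofPred_eq] at hb
      lia
    · rw [Finset.sum_eq_single (e d)]
      · simp [he_le d hd, tsub_add_cancel_of_le]
      · intro b _ hb
        split_ifs with hbd h
        · exact absurd (tsub_add_cancel_of_le hbd ▸ h).symm hb
        all_goals rfl
      · simp [E, he_degree d hd]
  rw [hfg]
  refine sum_mem fun b hb ↦ Ideal.mul_mem_right _ _ ?_
  rw [← show degree b = n by simpa [E] using hb]
  exact monomial_mem_variablesIdeal_pow b 1

theorem mem_variablesIdeal_pow_iff [Finite σ] {n : ℕ} {f : MvPowerSeries σ R} :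
    f ∈ variablesIdeal σ R ^ n ↔ ∀ d, degree d < n → coeff d f = 0 :=
  ⟨fun hf _ hd ↦ coeff_of_lt_order <|
      (Nat.cast_lt.2 hd).trans_le (natCast_le_order_of_mem_variablesIdeal_pow hf),
    mem_variablesIdeal_pow_of_coeff_eq_zero⟩

end CommSemiring

variable {σ R : Type*} [CommRing R]

theorem sub_one_mem_variablesIdeal_iff [Finite σ] {f : MvPowerSeries σ R} :
    f - 1 ∈ variablesIdeal σ R ↔ constantCoeff f = 1 := by
  rw [← pow_one (variablesIdeal σ R), mem_variablesIdeal_pow_iff, ← sub_eq_zero]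
  simp [degree_eq_zero_iff]

theorem sub_one_mem_variablesIdeal_pow_degree {a : σ →₀ ℕ} {r : R} {f : MvPowerSeries σ R}
    (hf : f - (1 + monomial a r) ∈ variablesIdeal σ R ^ (degree a + 1)) :
    f - 1 ∈ variablesIdeal σ R ^ degree a := by
  rw [← sub_add_cancel (f - 1) (monomial a r), sub_sub]
  exact add_mem (Ideal.pow_le_pow_right (Nat.le_succ _) hf) (monomial_mem_variablesIdeal_pow a r)

theorem zpow_sub_one_add_monomial_mem {a : σ →₀ ℕ} (ha : a ≠ 0) {r : R}
    {u : (MvPowerSeries σ R)ˣ}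
    (hu : (u : MvPowerSeries σ R) - (1 + monomial a r) ∈ variablesIdeal σ R ^ (degree a + 1))
    (k : ℤ) :
    ((u ^ k : (MvPowerSeries σ R)ˣ) : MvPowerSeries σ R) - (1 + monomial a (k • r)) ∈
      variablesIdeal σ R ^ (degree a + 1) := by
  have hsq : ((u : MvPowerSeries σ R) - 1) ^ 2 ∈ variablesIdeal σ R ^ (degree a + 1) := by
    have hdegree : degree a ≠ 0 := (degree_eq_zero_iff a).not.2 ha
    refine Ideal.pow_le_pow_right (by lia : degree a + 1 ≤ degree a * 2) ?_
    rw [pow_mul]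
    exact Ideal.pow_mem_pow (sub_one_mem_variablesIdeal_pow_degree hu) 2
  have hlinear := Ideal.mem_of_dvd _ (sub_one_sq_dvd_zpow_sub u k) hsq
  convert add_mem hlinear (Ideal.mul_mem_left _ (k : MvPowerSeries σ R) hu) using 1
  rw [map_zsmul, zsmul_eq_mul]
  ring

theorem one_sub_monomial_zpow_sub_mem {a : σ →₀ ℕ} (ha : a ≠ 0) {u : (MvPowerSeries σ R)ˣ}
    (hu : (u : MvPowerSeries σ R) = 1 - monomial a 1) (k : ℤ) :
    ((u ^ k : (MvPowerSeries σ R)ˣ) : MvPowerSeries σ R) - (1 + monomial a (-k : R)) ∈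
      variablesIdeal σ R ^ (degree a + 1) := by
  have hlead : (u : MvPowerSeries σ R) - (1 + monomial a (-1)) ∈
      variablesIdeal σ R ^ (degree a + 1) := by
    simp [hu, sub_eq_add_neg]
  simpa using zpow_sub_one_add_monomial_mem ha hlead k

end VariablesIdeal

section PartialProd

open MvPowerSeries Finsupp

/-- The partial product `∏_{0 < |a| ≤ N} v a`, the `N`-th approximation to an infinite product over
the nonzero exponents. It is a `finprod`, hence `1` by convention if infinitely many of these
factors are nontrivial, which cannot happen when `σ` is finite. -/
noncomputable def partialProd {σ M : Type*} [CommMonoid M] (v : {a : σ →₀ ℕ // a ≠ 0} → M)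
    (N : ℕ) : M :=
  ∏ᶠ (a : {a : σ →₀ ℕ // a ≠ 0}) (_ : degree a.1 ≤ N), v a

section CommMonoid

variable {σ M : Type*} [CommMonoid M]

theorem partialProd_congr {v w : {a : σ →₀ ℕ // a ≠ 0} → M} {N : ℕ}
    (h : ∀ a, degree a.1 ≤ N → v a = w a) : partialProd v N = partialProd w N :=
  finprod_mem_congr (s := {a : {a : σ →₀ ℕ // a ≠ 0} | degree a.1 ≤ N}) rfl h

theorem partialProd_zero (v : {a : σ →₀ ℕ // a ≠ 0} → M) : partialProd v 0 = 1 :=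
  finprod_mem_of_eqOn_one (s := {a : {a : σ →₀ ℕ // a ≠ 0} | degree a.1 ≤ 0}) fun a ha ↦
    absurd ((degree_eq_zero_iff _).1 (Nat.le_zero.1 ha)) a.2

theorem units_val_partialProd (v : {a : σ →₀ ℕ // a ≠ 0} → Mˣ) (N : ℕ) :
    ((partialProd v N : Mˣ) : M) = partialProd (fun a ↦ (v a : M)) N := by
  have hval : Function.Injective (Units.coeHom M) := Units.val_injective
  exact ((Units.coeHom M).map_finprod_of_injective hval _).trans <|
    finprod_congr fun a ↦ (Units.coeHom M).map_finprod_of_injective hval _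

/-- The exponents `a ≠ 0` of total degree `n`, which index the factors by which consecutive
partial products differ. -/
noncomputable def exponentsOfDegree (σ : Type*) [Finite σ] (n : ℕ) :
    Finset {a : σ →₀ ℕ // a ≠ 0} :=
  ((finite_of_degree_eq n).preimage Subtype.val_injective.injOn).toFinset

theorem mem_exponentsOfDegree [Finite σ] {n : ℕ} {a : {a : σ →₀ ℕ // a ≠ 0}} :
    a ∈ exponentsOfDegree σ n ↔ degree a.1 = n := by
  simp [exponentsOfDegree]

theorem partialProd_succ [Finite σ] (v : {a : σ →₀ ℕ // a ≠ 0} → M) (N : ℕ) :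
    partialProd v (N + 1) = partialProd v N * ∏ a ∈ exponentsOfDegree σ (N + 1), v a := by
  have hunion : {a : {a : σ →₀ ℕ // a ≠ 0} | degree a.1 ≤ N + 1} =
      {a | degree a.1 ≤ N} ∪ exponentsOfDegree σ (N + 1) := by
    ext a
    simp [mem_exponentsOfDegree, Nat.le_succ_iff]
  have hdisj : Disjoint {a : {a : σ →₀ ℕ // a ≠ 0} | degree a.1 ≤ N}
      (exponentsOfDegree σ (N + 1)) := by
    rw [Set.disjoint_left]
    intro a ha ha'
    exact (Nat.lt_succ_of_le ha).ne (mem_exponentsOfDegree.1 ha')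
  have hfin : {a : {a : σ →₀ ℕ // a ≠ 0} | degree a.1 ≤ N}.Finite :=
    (finite_of_degree_le N).preimage Subtype.val_injective.injOn
  have h := finprod_mem_union (f := v) hdisj hfin (Finset.finite_toSet _)
  rwa [← hunion, finprod_mem_coe_finset] at h

end CommMonoid

theorem constantCoeff_partialProd {σ R : Type*} [CommSemiring R]
    {v : {a : σ →₀ ℕ // a ≠ 0} → MvPowerSeries σ R} (hv : ∀ a, constantCoeff (v a) = 1) (N : ℕ) :
    constantCoeff (partialProd v N) = 1 :=
  finprod_mem_induction (s := {a : {a : σ →₀ ℕ // a ≠ 0} | degree a.1 ≤ N})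
    (fun f ↦ constantCoeff f = 1) (map_one _)
    (fun f g hf hg ↦ by rw [map_mul, hf, hg, one_mul]) fun a _ ↦ hv a

variable {σ R : Type*} [Finite σ] [CommRing R] {v : {a : σ →₀ ℕ // a ≠ 0} → MvPowerSeries σ R}
  {c : {a : σ →₀ ℕ // a ≠ 0} → R}

theorem coeff_sum_exponentsOfDegree_monomial (c : {a : σ →₀ ℕ // a ≠ 0} → R)
    (a : {a : σ →₀ ℕ // a ≠ 0}) :
    coeff a.1 (∑ b ∈ exponentsOfDegree σ (degree a.1), monomial b.1 (c b)) = c a := by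
  classical
  simp only [map_sum, coeff_monomial, Subtype.val_inj]
  simp [mem_exponentsOfDegree]

theorem prod_exponentsOfDegree_sub_mem
    (hv : ∀ a, v a - (1 + monomial a.1 (c a)) ∈ variablesIdeal σ R ^ (degree a.1 + 1))
    {n : ℕ} (hn : n ≠ 0) :
    ∏ a ∈ exponentsOfDegree σ n, v a -
      (1 + ∑ a ∈ exponentsOfDegree σ n, monomial a.1 (c a)) ∈ variablesIdeal σ R ^ (n + 1) := by
  have hprod : ∏ a ∈ exponentsOfDegree σ n, v a - 1 -
      ∑ a ∈ exponentsOfDegree σ n, (v a - 1) ∈ variablesIdeal σ R ^ (n + 1) := by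
    refine Ideal.pow_le_pow_right (by lia : n + 1 ≤ n * 2) ?_
    rw [pow_mul]
    exact prod_sub_one_sub_sum_mem_sq fun a ha ↦
      mem_exponentsOfDegree.1 ha ▸ sub_one_mem_variablesIdeal_pow_degree (hv a)
  have hsum : ∑ a ∈ exponentsOfDegree σ n, (v a - (1 + monomial a.1 (c a))) ∈
      variablesIdeal σ R ^ (n + 1) :=
    sum_mem fun a ha ↦ mem_exponentsOfDegree.1 ha ▸ hv a
  convert add_mem hprod hsum using 1
  simp only [Finset.sum_sub_distrib, Finset.sum_add_distrib]
  ring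

theorem sum_exponentsOfDegree_monomial_mem (c : {a : σ →₀ ℕ // a ≠ 0} → R) (n : ℕ) :
    ∑ a ∈ exponentsOfDegree σ n, monomial a.1 (c a) ∈ variablesIdeal σ R ^ n :=
  sum_mem fun a ha ↦ mem_exponentsOfDegree.1 ha ▸ monomial_mem_variablesIdeal_pow a.1 (c a)

theorem sub_sum_exponentsOfDegree_monomial_mem_iff {f : MvPowerSeries σ R} {n : ℕ} (hn : n ≠ 0)
    (hf : f ∈ variablesIdeal σ R ^ n) :
    f - ∑ a ∈ exponentsOfDegree σ n, monomial a.1 (c a) ∈ variablesIdeal σ R ^ (n + 1) ↔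
      ∀ a, degree a.1 = n → c a = coeff a.1 f := by
  have hcoeff (a : {a : σ →₀ ℕ // a ≠ 0}) (ha : degree a.1 = n) :
      coeff a.1 (f - ∑ b ∈ exponentsOfDegree σ n, monomial b.1 (c b)) = coeff a.1 f - c a := by
    rw [map_sub, ← ha, coeff_sum_exponentsOfDegree_monomial]
  rw [mem_variablesIdeal_pow_iff]
  constructor
  · intro h a ha
    exact (sub_eq_zero.1 (hcoeff a ha ▸ h a.1 (by lia))).symm
  · intro h d hd
    rcases Nat.lt_succ_iff_lt_or_eq.1 hd with hlt | heq
    · exact mem_variablesIdeal_pow_iff.1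
        (sub_mem hf (sum_exponentsOfDegree_monomial_mem c n)) d hlt
    · have hd0 : d ≠ 0 := (degree_eq_zero_iff d).not.1 (heq ▸ hn)
      rw [hcoeff ⟨d, hd0⟩ heq, h ⟨d, hd0⟩ heq, sub_self]

theorem sub_partialProd_succ_mem_iff
    (hv : ∀ a, v a - (1 + monomial a.1 (c a)) ∈ variablesIdeal σ R ^ (degree a.1 + 1))
    {F : MvPowerSeries σ R} {N : ℕ}
    (hF : F - partialProd v N ∈ variablesIdeal σ R ^ (N + 1)) :
    F - partialProd v (N + 1) ∈ variablesIdeal σ R ^ (N + 2) ↔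
      ∀ a, degree a.1 = N + 1 → c a = coeff a.1 (F - partialProd v N) := by
  set P := partialProd v N
  set D := ∏ a ∈ exponentsOfDegree σ (N + 1), v a
  set L := ∑ a ∈ exponentsOfDegree σ (N + 1), monomial a.1 (c a)
  have hDL : D - (1 + L) ∈ variablesIdeal σ R ^ (N + 2) :=
    prod_exponentsOfDegree_sub_mem hv N.succ_ne_zero
  have hD1 : D - 1 ∈ variablesIdeal σ R ^ (N + 1) := by
    rw [← sub_add_cancel (D - 1) L, sub_sub]
    exact add_mem (Ideal.pow_le_pow_right (Nat.le_succ _) hDL)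
      (sum_exponentsOfDegree_monomial_mem c _)
  have hP1 : P - 1 ∈ variablesIdeal σ R := by
    refine sub_one_mem_variablesIdeal_iff.2 (constantCoeff_partialProd (fun a ↦ ?_) N)
    exact sub_one_mem_variablesIdeal_iff.1 <|
      Ideal.pow_le_self ((degree_eq_zero_iff _).not.2 a.2)
        (sub_one_mem_variablesIdeal_pow_degree (hv a))
  have hPD : (P - 1) * (D - 1) ∈ variablesIdeal σ R ^ (N + 2) := by
    rw [pow_succ']
    exact Ideal.mul_mem_mul hP1 hD1
  have hsplit : F - partialProd v (N + 1) =
      F - P - L - ((P - 1) * (D - 1) + (D - (1 + L))) := by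
    rw [partialProd_succ]
    ring
  rw [hsplit, sub_eq_add_neg, add_mem_cancel_right (neg_mem (add_mem hPD hDL))]
  exact sub_sum_exponentsOfDegree_monomial_mem_iff N.succ_ne_zero hF

theorem forall_sub_partialProd_mem_iff
    (hv : ∀ a, v a - (1 + monomial a.1 (c a)) ∈ variablesIdeal σ R ^ (degree a.1 + 1))
    {F : MvPowerSeries σ R} (hF : constantCoeff F = 1) :
    (∀ N, 1 ≤ N → F - partialProd v N ∈ variablesIdeal σ R ^ (N + 1)) ↔
      ∀ a, c a = coeff a.1 (F - partialProd v (degree a.1 - 1)) := by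
  have hzero : F - partialProd v 0 ∈ variablesIdeal σ R ^ (0 + 1) := by
    rwa [partialProd_zero, pow_one, sub_one_mem_variablesIdeal_iff]
  have hone_le : (∀ N, 1 ≤ N → F - partialProd v N ∈ variablesIdeal σ R ^ (N + 1)) ↔
      ∀ N, F - partialProd v N ∈ variablesIdeal σ R ^ (N + 1) :=
    ⟨fun h N ↦ N.eq_zero_or_pos.elim (· ▸ hzero) (h N), fun h N _ ↦ h N⟩
  rw [hone_le]
  constructor
  · intro h a
    obtain ⟨N, hN⟩ := Nat.exists_eq_succ_of_ne_zero ((degree_eq_zero_iff _).not.2 a.2)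
    rw [hN]
    exact (sub_partialProd_succ_mem_iff hv (h N)).1 (h (N + 1)) a hN
  · intro h N
    induction N with
    | zero => exact hzero
    | succ N ih =>
      exact (sub_partialProd_succ_mem_iff hv ih).2 fun a ha ↦ by
        rw [h a, ha, Nat.add_sub_cancel]

end PartialProd

section ProductExpansion

open MvPowerSeries Finsupp

/- Besides the powers `u a k = (1 - t^a)^k`, this covers the factors `u a x = 1 - x t^a` with
`A a = R`, which give the Witt vector coordinates of `F`. -/
theorem poincare_stmt7_general {σ R : Type*} [Finite σ] [CommRing R] {F : MvPowerSeries σ R}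
    (hF : constantCoeff F = 1) {A : {a : σ →₀ ℕ // a ≠ 0} → Type*}
    (u : ∀ a, A a → MvPowerSeries σ R) (φ : ∀ a, A a ≃ R)
    (hu : ∀ a x, u a x - (1 + monomial a.1 (φ a x)) ∈
      variablesIdeal σ R ^ (degree a.1 + 1)) :
    ∃! k : ∀ a, A a, ∀ N, 1 ≤ N →
      F - partialProd (fun a ↦ u a (k a)) N ∈ variablesIdeal σ R ^ (N + 1) := by
  let Φ (k : ∀ a, A a) (a : {a : σ →₀ ℕ // a ≠ 0}) : A a :=
    (φ a).symm (coeff a.1 (F - partialProd (fun b ↦ u b (k b)) (degree a.1 - 1)))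
  have hfixed (k : ∀ a, A a) :
      (∀ N, 1 ≤ N → F - partialProd (fun a ↦ u a (k a)) N ∈ variablesIdeal σ R ^ (N + 1)) ↔
        Function.IsFixedPt Φ k := by
    rw [forall_sub_partialProd_mem_iff (fun a ↦ hu a (k a)) hF, Function.IsFixedPt, funext_iff]
    exact forall_congr' fun a ↦ by rw [Equiv.symm_apply_eq, eq_comm]
  have hcausal (k l : ∀ a, A a) (a) (h : ∀ b, degree b.1 < degree a.1 → k b = l b) :
      Φ k a = Φ l a := by
    have hdegree : degree a.1 ≠ 0 := (degree_eq_zero_iff _).not.2 a.2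
    have hprod : partialProd (fun b ↦ u b (k b)) (degree a.1 - 1) =
        partialProd (fun b ↦ u b (l b)) (degree a.1 - 1) :=
      partialProd_congr fun b hb ↦ by rw [h b (by lia)]
    simp only [Φ, hprod]
  have hA (a) : Nonempty (A a) := ⟨(φ a).symm 0⟩
  simp only [hfixed]
  exact existsUnique_isFixedPt_of_wellFounded
    (InvImage.wf (fun a : {a : σ →₀ ℕ // a ≠ 0} ↦ degree a.1) wellFounded_lt) Φ hcausal

end ProductExpansion

/-- Every formal power series `F ∈ ℤ[[t₁, …, t_s]]` with constant term `1` has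
a unique representation as an infinite product `∏_{a ≠ 0} (1 - t^a)^{k_a}` with integer
exponents `k_a ∈ ℤ`: there is a unique family `(k_a)` of integers such that for every
`N ≥ 1`, `F` is congruent to the finite product `∏_{0 < |a| ≤ N} (1 - t^a)^{k_a}` modulo
the `(N+1)`-st power of the ideal `(t₁, …, t_s)`.  (Here `u a` is the series `1 - t^a`
regarded as a unit of `ℤ[[t₁, …, t_s]]`, so that negative powers make sense.) -/
theorem poincare_stmt7 {s : ℕ} (F : MvPowerSeries (Fin s) ℤ)
    (hF : MvPowerSeries.constantCoeff (σ := Fin s) (R := ℤ) F = 1)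
    (u : {a : Fin s →₀ ℕ // a ≠ 0} → (MvPowerSeries (Fin s) ℤ)ˣ)
    (hu : ∀ a : {a : Fin s →₀ ℕ // a ≠ 0}, (u a : MvPowerSeries (Fin s) ℤ) =
      1 - MvPowerSeries.monomial (R := ℤ) (a : Fin s →₀ ℕ) 1) :
    ∃! k : {a : Fin s →₀ ℕ // a ≠ 0} → ℤ,
      ∀ N : ℕ, 1 ≤ N →
        F - ↑(∏ᶠ (a : {a : Fin s →₀ ℕ // a ≠ 0})
            (_ : (a : Fin s →₀ ℕ).sum (fun _ n => n) ≤ N), u a ^ k a)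
          ∈ (Ideal.span (Set.range (MvPowerSeries.X : Fin s → MvPowerSeries (Fin s) ℤ)))
              ^ (N + 1) := by
  have h := poincare_stmt7_general hF (fun a k ↦ (u a ^ k).val) (fun _ ↦ Equiv.neg ℤ)
    fun a k ↦ one_sub_monomial_zpow_sub_mem a.2 (hu a) k
  simp only [← units_val_partialProd] at h
  exact h
end
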